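/- arXiv:1902.02615 — 2 statements merged into one kernel-verified Lean document; each statement's English description precedes it below -/
import Mathlib

section
/- Let A be an m×n real matrix, b ∈ ℝ^m, y ∈ ℝ^m, s ∈ ℝ^n, and ℓ, ℓ', u, u' ∈ ℝ^n with ℓ_j ≤ ℓ'_j and u'_j ≤ u_j for all j. If y_i ≥ 0 for all i, yᵀA + s = 0, and yᵀb + s{ℓ,u} > 0, then also yᵀb + s{ℓ',u'} > 0; in particular (y,s) certifies that there is no x with A x ≥ b componentwise and ℓ'_j ≤ x_j ≤ u'_j for all j. -/
open Matrix

section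

variable {R m n : Type*} [Ring R] [LinearOrder R] [Fintype m] [Fintype n]

/-- The paper's `s{ℓ,u}`: the minimum of the linear form `x ↦ s ⬝ᵥ x` over the box `[ℓ, u]` when
`ℓ ≤ u`. The formula itself makes sense without that inequality. -/
def boxBound (s ℓ u : n → R) : R :=
  ∑ j, if 0 < s j then s j * ℓ j else if s j < 0 then s j * u j else 0

/-- The pair `(y, s)` is a Farkas proof that `b ≤ A *ᵥ x`, `ℓ ≤ x ≤ u` has no solution: `y` and `s`
are the multipliers of the rows of `A` and of the bounds, respectively. -/
structure IsFarkasProof (A : Matrix m n R) (b : m → R) (ℓ u : n → R) (y : m → R) (s : n → R) :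
    Prop where
  nonneg : 0 ≤ y
  vecMul_add_eq_zero : y ᵥ* A + s = 0
  pos : 0 < y ⬝ᵥ b + boxBound s ℓ u

theorem boxBound_self (s x : n → R) : boxBound s x x = s ⬝ᵥ x := by
  refine Finset.sum_congr rfl fun j _ => ?_
  rcases lt_trichotomy (s j) 0 with hneg | hzero | hpos
  · rw [if_neg hneg.not_gt, if_pos hneg]
  · simp [hzero]
  · rw [if_pos hpos]

variable [IsOrderedRing R] {A : Matrix m n R} {b y : m → R} {s ℓ ℓ' u u' : n → R}

theorem boxBound_le_boxBound (s : n → R) (hl : ℓ ≤ ℓ') (hu : u' ≤ u) :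
    boxBound s ℓ u ≤ boxBound s ℓ' u' := by
  refine Finset.sum_le_sum fun j _ => ?_
  split_ifs with hpos hneg
  · exact mul_le_mul_of_nonneg_left (hl j) hpos.le
  · exact mul_le_mul_of_nonpos_left (hu j) hneg.le
  · exact le_rfl

namespace IsFarkasProof

theorem tighten (h : IsFarkasProof A b ℓ u y s) (hl : ℓ ≤ ℓ') (hu : u' ≤ u) :
    IsFarkasProof A b ℓ' u' y s where
  nonneg := h.nonneg
  vecMul_add_eq_zero := h.vecMul_add_eq_zero
  pos := h.pos.trans_le (add_le_add_right (boxBound_le_boxBound s hl hu) _)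

-- A feasible `x` would let the proof be tightened to the one-point box `[x, x]`.
theorem infeasible (h : IsFarkasProof A b ℓ u y s) :
    ¬ ∃ x : n → R, b ≤ A *ᵥ x ∧ ∀ j, x j ∈ Set.Icc (ℓ j) (u j) := by
  rintro ⟨x, hb, hx⟩
  have hpoint : IsFarkasProof A b x x y s := h.tighten (fun j => (hx j).1) fun j => (hx j).2
  refine lt_irrefl (0 : R) ?_
  calc
    0 < y ⬝ᵥ b + boxBound s x x := hpoint.pos
    _ = y ⬝ᵥ b + s ⬝ᵥ x := by rw [boxBound_self]
    _ ≤ y ⬝ᵥ (A *ᵥ x) + s ⬝ᵥ x :=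
      add_le_add_left (dotProduct_le_dotProduct_of_nonneg_left hb h.nonneg) _
    _ = (y ᵥ* A + s) ⬝ᵥ x := by rw [dotProduct_mulVec, add_dotProduct]
    _ = 0 := by rw [h.vecMul_add_eq_zero, zero_dotProduct]

end IsFarkasProof

theorem farkas_proof_tightened_general (h : IsFarkasProof A b ℓ u y s) (hl : ℓ ≤ ℓ')
    (hu : u' ≤ u) :
    IsFarkasProof A b ℓ' u' y s ∧
      ¬ ∃ x : n → R, b ≤ A *ᵥ x ∧ ∀ j, x j ∈ Set.Icc (ℓ' j) (u' j) :=
  have h' := h.tighten hl hu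
  ⟨h', h'.infeasible⟩

end

/-- A Farkas proof (y,s) for bounds ℓ,u remains valid for tightened bounds
ℓ',u': the dual infeasibility condition still holds, and in particular the
tightened system Ax ≥ b, ℓ' ≤ x ≤ u' is infeasible. -/
theorem farkas_proof_tightened
    (m n : ℕ) (A : Matrix (Fin m) (Fin n) ℝ) (b : Fin m → ℝ)
    (y : Fin m → ℝ) (s : Fin n → ℝ) (ℓ ℓ' u u' : Fin n → ℝ)
    (hl : ∀ j, ℓ j ≤ ℓ' j) (hu : ∀ j, u' j ≤ u j)
    (hy : ∀ i, 0 ≤ y i)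
    (hAs : ∀ j, (∑ i, y i * A i j) + s j = 0)
    (hpos : 0 < (∑ i, y i * b i) +
      ∑ j, if 0 < s j then s j * ℓ j else if s j < 0 then s j * u j else 0) :
    (0 < (∑ i, y i * b i) +
      ∑ j, if 0 < s j then s j * ℓ' j else if s j < 0 then s j * u' j else 0) ∧
    ¬ ∃ x : Fin n → ℝ,
        (∀ i, b i ≤ ∑ j, A i j * x j) ∧ (∀ j, ℓ' j ≤ x j ∧ x j ≤ u' j) :=
  (farkas_proof_tightened_general ⟨hy, funext hAs, hpos⟩ hl hu).imp_left IsFarkasProof.pos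
end

section
/- Let A be an m×n real matrix, b ∈ ℝ^m, and ℓ, u, x ∈ ℝ^n with A x ≥ b componentwise and ℓ_k ≤ x_k ≤ u_k for all k. Fix a column index j and suppose variable j has zero up-locks, i.e., A_{ij} ≥ 0 for every row index i. Define x' by x'_j := u_j and x'_k := x_k for k ≠ j. Then A x' ≥ b componentwise and ℓ_k ≤ x'_k ≤ u_k for all k. -/
section RaiseCoordinate

variable {κ : Type*} [DecidableEq κ]

theorem update_mem_Icc_of_mem_Icc {α : κ → Type*} [∀ k, Preorder (α k)] {ℓ u x : ∀ k, α k}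
    {j : κ} {c : α j} (hx : x ∈ Set.Icc ℓ u) (hc : c ∈ Set.Icc (x j) (u j)) :
    Function.update x j c ∈ Set.Icc ℓ u :=
  ⟨hx.1.trans (le_update_self_iff.2 hc.1), update_le_iff.2 ⟨hc.2, fun k _ => hx.2 k⟩⟩

variable {R : Type*} [NonUnitalNonAssocSemiring R] [PartialOrder R] [IsOrderedAddMonoid R]
  [PosMulMono R] [Fintype κ]

theorem sum_mul_le_sum_mul_update {a x : κ → R} {j : κ} {c : R} (ha : 0 ≤ a j) (hc : x j ≤ c) :
    ∑ k, a k * x k ≤ ∑ k, a k * Function.update x j c k := by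
  refine Finset.sum_le_sum fun k _ => ?_
  obtain rfl | hkj := eq_or_ne k j
  · rw [Function.update_self]
    exact mul_le_mul_of_nonneg_left hc ha
  · rw [Function.update_of_ne hkj]

theorem zero_up_locks_set_to_upper_general {ι : Type*} {A : Matrix ι κ R} {b : ι → R}
    {ℓ u x : κ → R} {j : κ} {c : R} (hx : ∀ i, b i ≤ ∑ k, A i k * x k)
    (hbox : x ∈ Set.Icc ℓ u) (hlock : ∀ i, 0 ≤ A i j) (hc : c ∈ Set.Icc (x j) (u j)) :
    (∀ i, b i ≤ ∑ k, A i k * Function.update x j c k) ∧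
      Function.update x j c ∈ Set.Icc ℓ u :=
  ⟨fun i => (hx i).trans (sum_mul_le_sum_mul_update (hlock i) hc.1),
    update_mem_Icc_of_mem_Icc hbox hc⟩

end RaiseCoordinate

/-- A variable with zero up-locks (no negative coefficient in its column)
can be set to its upper bound without violating any constraint or bound. -/
theorem zero_up_locks_set_to_upper
    (m n : ℕ) (A : Matrix (Fin m) (Fin n) ℝ) (b : Fin m → ℝ)
    (ℓ u x : Fin n → ℝ)
    (hx : ∀ i, b i ≤ ∑ k, A i k * x k)
    (hbox : ∀ k, ℓ k ≤ x k ∧ x k ≤ u k)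
    (j : Fin n) (hlock : ∀ i, 0 ≤ A i j) :
    (∀ i, b i ≤ ∑ k, A i k * (Function.update x j (u j)) k) ∧
    (∀ k, ℓ k ≤ (Function.update x j (u j)) k ∧
          (Function.update x j (u j)) k ≤ u k) := by
  simpa only [Set.mem_Icc, Pi.le_def, ← forall_and] using
    zero_up_locks_set_to_upper_general hx (forall_and.1 hbox) hlock ⟨(hbox j).2, le_rfl⟩
end
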